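/- For every a > 0, b > 0 and t > 0, P[ M_t < b and A_t < a ] = e^{-2/a} · E[ exp( 2·M_t / (a + A_t) ) · 1{ M_t ≤ b·(1 + A_t/a)² } ]. -/

import Mathlib

open MeasureTheory ProbabilityTheory Real Set

noncomputable section

/-- A standard one-dimensional Brownian motion `B` (with `B 0 = 0`, continuous
paths, Gaussian increments and independent increments) on a probability space
with measure `P`. -/
structure IsBrownianMotion {Ω : Type*} [MeasurableSpace Ω]
    (P : Measure Ω) (B : ℝ → Ω → ℝ) : Prop where
  isProbabilityMeasure : IsProbabilityMeasure P
  measurable : ∀ t : ℝ, Measurable (B t)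
  start : ∀ ω, B 0 ω = 0
  continuous_paths : ∀ ω, Continuous fun t => B t ω
  gaussian_increments : ∀ s t : ℝ, 0 ≤ s → s ≤ t →
    P.map (fun ω => B t ω - B s ω) = gaussianReal 0 (Real.toNNReal (t - s))
  indep_increments : ∀ t : ℕ → ℝ, Monotone t → 0 ≤ t 0 →
    iIndepFun
      (fun (i : ℕ) (ω : Ω) => B (t (i + 1)) ω - B (t i) ω) P

/-- The exponential martingale `M_t = exp (B_t - t/2)`. -/
def M {Ω : Type*} (B : ℝ → Ω → ℝ) (t : ℝ) (ω : Ω) : ℝ :=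
  Real.exp (B t ω - t / 2)

/-- The time integral `A_t = ∫_0^t exp (B_s - s/2) ds`. -/
def A {Ω : Type*} (B : ℝ → Ω → ℝ) (t : ℝ) (ω : Ω) : ℝ :=
  ∫ s in (0 : ℝ)..t, Real.exp (B s ω - s / 2)

/-- The time integral with drift `ν`: `A_t^{(ν)} = ∫_0^t exp (B_s + (ν - 1/2) s) ds`. -/
def Adrift {Ω : Type*} (B : ℝ → Ω → ℝ) (ν t : ℝ) (ω : Ω) : ℝ :=
  ∫ s in (0 : ℝ)..t, Real.exp (B s ω + (ν - 1 / 2) * s)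

variable {Ω : Type*} [MeasurableSpace Ω] (P : MeasureTheory.Measure Ω) (B : ℝ → Ω → ℝ)

/-!
For real `α`, the Möbius map `y ↦ y / (1 + α y)` acts on paths of `A`, hence on the pairs
`(M, A) = (A', A)`, and the inverse of this action is the one of `-α`. The proof shows that the
action turns the law of `(M_t, A_t)`, weighted by `exp (2 (α M_t / (1 + α A_t) - α))` on
`0 < 1 + α A_t`, into the same law restricted to `0 < 1 - α A_t`. For `α = 1 / a`, comparing the
masses of `{M ≤ b}` under both gives the formula; `≤` and `<` agree because the law of `M_t` has no
atoms.

To avoid stochastic calculus, discretize `(M, A)`, approximating the integral of `M` over a time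
step by the geometric mean of its end values: then the action is *exactly* a change of the
log-increments of `M`. One step is a Gaussian change of variables, whose density has as logarithm
a quadratic expression in the increments `x` of `log M` and `L` of `log (1 + α A)`. The increment of
the limiting log-density is the same expression with two factors replaced by their `sinh`. So the
weights telescope up to errors of third order in `x`, whose sum tends to zero almost surely along a
subsequence. Fatou's lemma gives one inequality between the two measures for every `α`; applied to
the inverse action of `-α`, it gives the other.
-/

open Filter Topology ENNReal NNReal BoundedContinuousFunction

section MoebiusAction

variable (α h : ℝ)

/-- The action on pairs `(m, a) = (M, A)` of the Möbius map `y ↦ y / (1 + α y)`: it is applied to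
`A`, and `M = dA/dt` is multiplied by its derivative at `A`. Meaningful where `0 < 1 + α a`. -/
def moebius (p : ℝ × ℝ) : ℝ × ℝ := (p.1 / (1 + α * p.2) ^ 2, p.2 / (1 + α * p.2))

/-- The logarithm of the density that the law of `(M, A)` acquires under `moebius α`. -/
def moebiusLogDensity (p : ℝ × ℝ) : ℝ := 2 * (α * p.1 / (1 + α * p.2) - α)

/-- The density `exp (moebiusLogDensity α)`, cut off outside the domain `0 < 1 + α a` of
`moebius α`. -/
def moebiusDensity : ℝ × ℝ → ℝ≥0∞ :=
  {p | 0 < 1 + α * p.2}.indicator fun p => ENNReal.ofReal (rexp (moebiusLogDensity α p))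

@[fun_prop]
lemma measurable_moebius : Measurable (moebius α) := by
  unfold moebius
  fun_prop

lemma measurableSet_one_add_mul_snd_pos : MeasurableSet {p : ℝ × ℝ | 0 < 1 + α * p.2} :=
  measurableSet_lt measurable_const (by fun_prop)

@[fun_prop]
lemma measurable_moebiusDensity : Measurable (moebiusDensity α) := by
  refine Measurable.indicator ?_ (measurableSet_one_add_mul_snd_pos α)
  unfold moebiusLogDensity
  fun_prop

variable {α} {p : ℝ × ℝ}

lemma one_add_neg_mul_moebius_snd (hp : 1 + α * p.2 ≠ 0) :
    1 + -α * (moebius α p).2 = (1 + α * p.2)⁻¹ := by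
  simp only [moebius]
  field_simp
  ring

lemma moebius_neg_moebius (hp : 1 + α * p.2 ≠ 0) : moebius (-α) (moebius α p) = p := by
  rw [moebius, one_add_neg_mul_moebius_snd hp]
  simp only [moebius]
  ext
  · field_simp
  · exact (div_inv_eq_mul _ _).trans (div_mul_cancel₀ _ hp)

lemma moebiusLogDensity_moebius (hp : 1 + α * p.2 ≠ 0) :
    moebiusLogDensity (-α) (moebius α p) = -moebiusLogDensity α p := by
  rw [moebiusLogDensity, one_add_neg_mul_moebius_snd hp]
  simp only [moebius, moebiusLogDensity]
  field_simp
  ring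

lemma moebiusDensity_mul_moebiusDensity_moebius (hp : 0 < 1 + α * p.2) :
    moebiusDensity α p * moebiusDensity (-α) (moebius α p) = 1 := by
  have hp' : 0 < 1 + -α * (moebius α p).2 := by
    rw [one_add_neg_mul_moebius_snd hp.ne']
    exact inv_pos.2 hp
  rw [moebiusDensity, moebiusDensity, indicator_of_mem (by exact hp),
    indicator_of_mem (by exact hp'),
    moebiusLogDensity_moebius hp.ne', ← ENNReal.ofReal_mul (exp_pos _).le, ← Real.exp_add,
    add_neg_cancel, Real.exp_zero, ENNReal.ofReal_one]

lemma continuousAt_moebius (hp : 1 + α * p.2 ≠ 0) : ContinuousAt (moebius α) p := by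
  unfold moebius
  fun_prop (disch := positivity)

lemma continuousAt_moebiusLogDensity (hp : 1 + α * p.2 ≠ 0) :
    ContinuousAt (moebiusLogDensity α) p := by
  unfold moebiusLogDensity
  fun_prop (disch := assumption)

end MoebiusAction

section DiscreteStep

/-- One time step of length `h` of a discretization of `(M, A)` with log-increment `x` of `M`.
The integral of `M` over the step is approximated by the geometric mean of its values at the end
points, which makes the discretization exactly equivariant under `moebius`. -/
def discreteStep (h : ℝ) (p : ℝ × ℝ) (x : ℝ) : ℝ × ℝ :=
  (p.1 * rexp x, p.2 + h * (p.1 * rexp (x / 2)))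

/-- The discretization of `(M, A)` started at `(1, 0)` and driven by the log-increments `x`. -/
def discretePath (h : ℝ) (x : ℕ → ℝ) : ℕ → ℝ × ℝ
  | 0 => (1, 0)
  | k + 1 => discreteStep h (discretePath h x k) (x k)

/-- The increment of `log (1 + α A)` over a discrete time step. -/
def logDenomIncrement (α h : ℝ) (p : ℝ × ℝ) (x : ℝ) : ℝ :=
  Real.log ((1 + α * (discreteStep h p x).2) / (1 + α * p.2))

/-- The log-density that the Gaussian law of the log-increment `x` acquires under the
transformation `x ↦ x - 2 * logDenomIncrement α h p x` induced by `moebius α`. -/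
def stepLogWeight (α h : ℝ) (p : ℝ × ℝ) (x : ℝ) : ℝ :=
  2 * logDenomIncrement α h p x * (x - logDenomIncrement α h p x) / h

/-- The density `exp (stepLogWeight α h p x)`, cut off when the step starts or ends outside the
domain of `moebius α`. -/
def stepWeight (α h : ℝ) (p : ℝ × ℝ) (x : ℝ) : ℝ≥0∞ :=
  {q : (ℝ × ℝ) × ℝ | 0 < 1 + α * q.1.2 ∧ 0 < 1 + α * (discreteStep h q.1 q.2).2}.indicator
    (fun q => ENNReal.ofReal (rexp (stepLogWeight α h q.1 q.2))) (p, x)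

/-- The product of the `stepWeight`s of the first `n` steps of `discretePath h x`. -/
def pathWeight (α h : ℝ) (x : ℕ → ℝ) (n : ℕ) : ℝ≥0∞ :=
  ∏ k ∈ Finset.range n, stepWeight α h (discretePath h x k) (x k)

variable {α h : ℝ} {p : ℝ × ℝ} {x : ℝ}

@[fun_prop]
lemma measurable_discreteStep : Measurable fun q : (ℝ × ℝ) × ℝ => discreteStep h q.1 q.2 := by
  unfold discreteStep
  fun_prop

@[fun_prop]
lemma measurable_stepWeight : Measurable fun q : (ℝ × ℝ) × ℝ => stepWeight α h q.1 q.2 := by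
  refine Measurable.indicator ?_ ?_
  · unfold stepLogWeight logDenomIncrement
    fun_prop
  · have start : Measurable fun q : (ℝ × ℝ) × ℝ => 1 + α * q.1.2 := by fun_prop
    have finish : Measurable fun q : (ℝ × ℝ) × ℝ => 1 + α * (discreteStep h q.1 q.2).2 := by
      fun_prop
    exact (measurableSet_lt measurable_const start).inter
      (measurableSet_lt measurable_const finish)

lemma one_add_mul_discreteStep_snd (hp : 1 + α * p.2 ≠ 0) :
    1 + α * (discreteStep h p x).2
      = (1 + α * p.2) * (1 + h * (α * p.1 / (1 + α * p.2)) * rexp (x / 2)) := by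
  simp only [discreteStep]
  field_simp
  ring

lemma exp_logDenomIncrement (hp : 0 < 1 + α * p.2) (hq : 0 < 1 + α * (discreteStep h p x).2) :
    rexp (logDenomIncrement α h p x) = (1 + α * (discreteStep h p x).2) / (1 + α * p.2) :=
  exp_log (div_pos hq hp)

lemma moebius_discreteStep (hp : 0 < 1 + α * p.2) (hq : 0 < 1 + α * (discreteStep h p x).2) :
    moebius α (discreteStep h p x)
      = discreteStep h (moebius α p) (x - 2 * logDenomIncrement α h p x) := by
  have hL := exp_logDenomIncrement hp hq
  have half : rexp ((x - 2 * logDenomIncrement α h p x) / 2)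
      = rexp (x / 2) / rexp (logDenomIncrement α h p x) := by
    rw [← Real.exp_sub]
    ring_nf
  have full : rexp (x - 2 * logDenomIncrement α h p x)
      = rexp x / rexp (logDenomIncrement α h p x) ^ 2 := by
    rw [Real.exp_sub, ← Real.exp_nat_mul]
    norm_num
  rw [discreteStep.eq_def h (moebius α p), half, full, hL]
  simp only [moebius, discreteStep] at hq ⊢
  have hp' := hp.ne'
  have hq' := hq.ne'
  ext
  · field_simp
  · generalize hZ : 1 + α * (p.2 + h * (p.1 * rexp (x / 2))) = Z at hq' ⊢
    generalize hY : 1 + α * p.2 = Y at hp' ⊢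
    field_simp
    rw [← hZ, ← hY]
    ring

lemma moebiusLogDensity_discreteStep_sub (hh : h ≠ 0) (hp : 0 < 1 + α * p.2)
    (hq : 0 < 1 + α * (discreteStep h p x).2) :
    moebiusLogDensity α (discreteStep h p x) - moebiusLogDensity α p
      = 8 / h * (sinh (logDenomIncrement α h p x / 2)
        * sinh ((x - logDenomIncrement α h p x) / 2)) := by
  set L := logDenomIncrement α h p x
  have hL : rexp L = (1 + α * (discreteStep h p x).2) / (1 + α * p.2) :=
    exp_logDenomIncrement hp hq
  have sinh_half (y : ℝ) : sinh (y / 2) = (rexp y - 1) / (2 * rexp (y / 2)) := by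
    have : rexp y = rexp (y / 2) ^ 2 := by rw [← Real.exp_nat_mul]; ring_nf
    rw [sinh_eq, Real.exp_neg, this]
    field_simp
  have product : sinh (L / 2) * sinh ((x - L) / 2)
      = (rexp L - 1) * (rexp x / rexp L - 1) / (4 * rexp (x / 2)) := by
    rw [sinh_half, sinh_half, div_mul_div_comm, Real.exp_sub, mul_mul_mul_comm, ← Real.exp_add]
    ring_nf
  have hx : rexp x = rexp (x / 2) ^ 2 := by rw [← Real.exp_nat_mul]; ring_nf
  rw [product, hL]
  simp only [moebiusLogDensity, discreteStep, hx] at hq ⊢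
  have hp' := hp.ne'
  have hq' := hq.ne'
  generalize hZ : 1 + α * (p.2 + h * (p.1 * rexp (x / 2))) = Z at hq' ⊢
  field_simp
  rw [← hZ]
  ring

end DiscreteStep

section GaussianStep

variable {c h x L : ℝ}

lemma gaussianPDFReal_sub_two_mul (hh : 0 < h) :
    gaussianPDFReal (-(h / 2)) h.toNNReal (x - 2 * L)
      = rexp L * (gaussianPDFReal (-(h / 2)) h.toNNReal x * rexp (2 * L * (x - L) / h)) := by
  rw [gaussianPDFReal, gaussianPDFReal, Real.coe_toNNReal _ hh.le, mul_assoc (√_)⁻¹,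
    ← Real.exp_add, mul_left_comm, ← Real.exp_add]
  congr 2
  field_simp
  ring

lemma hasDerivAt_sub_two_mul_log (hx : 0 < 1 + c * rexp (x / 2)) :
    HasDerivAt (fun y => y - 2 * Real.log (1 + c * rexp (y / 2))) (1 + c * rexp (x / 2))⁻¹ x := by
  have inner : HasDerivAt (fun y => 1 + c * rexp (y / 2)) (c * (rexp (x / 2) * (1 / 2))) x :=
    ((((hasDerivAt_id x).div_const 2).exp).const_mul c).const_add 1
  refine ((hasDerivAt_id x).sub ((inner.log hx.ne').const_mul 2)).congr_deriv ?_
  field_simp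
  ring

lemma injOn_sub_two_mul_log :
    InjOn (fun y => y - 2 * Real.log (1 + c * rexp (y / 2))) {y | 0 < 1 + c * rexp (y / 2)} := by
  have exp_neg_half {y : ℝ} (hy : 0 < 1 + c * rexp (y / 2)) :
      rexp (-(y - 2 * Real.log (1 + c * rexp (y / 2))) / 2) = rexp (-(y / 2)) + c := by
    have (L : ℝ) : -(y - 2 * L) / 2 = -(y / 2) + L := by ring
    rw [this, Real.exp_add, exp_log hy, Real.exp_neg]
    field_simp
  intro y hy z hz hyz
  have : rexp (-(y / 2)) + c = rexp (-(z / 2)) + c := by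
    rw [← exp_neg_half hy, ← exp_neg_half hz]
    simp only [hyz]
  linarith [Real.exp_injective (add_right_cancel this)]

lemma setLIntegral_gaussianReal_sub_two_mul_log_le (hh : 0 < h) {f : ℝ → ℝ≥0∞}
    (hf : Measurable f) :
    ∫⁻ x in {x | 0 < 1 + c * rexp (x / 2)},
        ENNReal.ofReal (rexp (2 * Real.log (1 + c * rexp (x / 2))
            * (x - Real.log (1 + c * rexp (x / 2))) / h))
          * f (x - 2 * Real.log (1 + c * rexp (x / 2)))
        ∂gaussianReal (-(h / 2)) h.toNNReal
      ≤ ∫⁻ x, f x ∂gaussianReal (-(h / 2)) h.toNNReal := by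
  have hv : h.toNNReal ≠ 0 := by simpa using hh
  set D := {x | 0 < 1 + c * rexp (x / 2)}
  have hD : MeasurableSet D := measurableSet_lt measurable_const (by fun_prop)
  rw [gaussianReal_of_var_ne_zero _ hv, restrict_withDensity hD,
    lintegral_withDensity_eq_lintegral_mul _ (measurable_gaussianPDF _ _) (by fun_prop),
    lintegral_withDensity_eq_lintegral_mul _ (measurable_gaussianPDF _ _) hf]
  have changeOfVariables := lintegral_image_eq_lintegral_abs_deriv_mul hD
    (fun x hx => (hasDerivAt_sub_two_mul_log (c := c) hx).hasDerivWithinAt) injOn_sub_two_mul_log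
    (gaussianPDF (-(h / 2)) h.toNNReal * f)
  refine le_trans (le_of_eq ?_) (changeOfVariables.symm.trans_le (setLIntegral_le_lintegral _ _))
  refine setLIntegral_congr_fun hD fun x hx => ?_
  simp only [Pi.mul_apply, gaussianPDF, ← mul_assoc]
  rw [← ENNReal.ofReal_mul (gaussianPDFReal_nonneg _ _ _), ← ENNReal.ofReal_mul (abs_nonneg _),
    gaussianPDFReal_sub_two_mul hh, exp_log hx, abs_of_pos (inv_pos.2 hx),
    inv_mul_cancel_left₀ (ne_of_gt hx)]

variable {α : ℝ}

lemma lintegral_stepWeight_mul_moebius_le (hh : 0 < h) (p : ℝ × ℝ) {g : ℝ × ℝ → ℝ≥0∞}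
    (hg : Measurable g) :
    ∫⁻ x, stepWeight α h p x * g (moebius α (discreteStep h p x))
        ∂gaussianReal (-(h / 2)) h.toNNReal
      ≤ ∫⁻ x, g (discreteStep h (moebius α p) x) ∂gaussianReal (-(h / 2)) h.toNNReal := by
  rcases le_or_gt (1 + α * p.2) 0 with hp | hp
  · simp [stepWeight, hp.not_gt]
  set c := h * (α * p.1 / (1 + α * p.2))
  have ratio (x : ℝ) : 1 + α * (discreteStep h p x).2 = (1 + α * p.2) * (1 + c * rexp (x / 2)) :=
    one_add_mul_discreteStep_snd hp.ne'
  refine le_trans (le_of_eq ?_) (setLIntegral_gaussianReal_sub_two_mul_log_le (c := c) hh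
    (f := fun y => g (discreteStep h (moebius α p) y)) (by fun_prop))
  rw [← lintegral_indicator (measurableSet_lt measurable_const (by fun_prop))]
  refine lintegral_congr fun x => ?_
  by_cases hx : 0 < 1 + c * rexp (x / 2)
  · have hq : 0 < 1 + α * (discreteStep h p x).2 := by
      rw [ratio]
      exact mul_pos hp hx
    have log_ratio : logDenomIncrement α h p x = Real.log (1 + c * rexp (x / 2)) := by
      rw [logDenomIncrement, ratio, mul_div_cancel_left₀ _ hp.ne']
    rw [stepWeight, indicator_of_mem (by exact ⟨hp, hq⟩), indicator_of_mem (by exact hx),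
      moebius_discreteStep hp hq, stepLogWeight, log_ratio]
  · have hq : ¬ 0 < 1 + α * (discreteStep h p x).2 := by
      rwa [ratio, mul_pos_iff_of_pos_left hp]
    rw [stepWeight, indicator_of_notMem (fun hpq => hq hpq.2), indicator_of_notMem (by exact hx),
      zero_mul]

end GaussianStep

section Recursion

variable {E T : Type*} [MeasurableSpace E] [MeasurableSpace T] {P : Measure Ω}
  {x : ℕ → Ω → E} {S : ℕ → Ω → T} {F : T × E → T} {s : T}

omit [MeasurableSpace Ω] in
lemma measurable_recursion (hF : Measurable F) (start : ∀ ω, S 0 ω = s)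
    (succ : ∀ k ω, S (k + 1) ω = F (S k ω, x k ω)) {m : MeasurableSpace Ω} {k : ℕ}
    (hx : ∀ j < k, Measurable[m] (x j)) : Measurable[m] (S k) := by
  induction k with
  | zero => simpa only [funext start] using measurable_const
  | succ k ih =>
    rw [funext (succ k)]
    exact hF.comp ((ih fun j hj => hx j (hj.trans k.lt_succ_self)).prodMk (hx k k.lt_succ_self))

lemma indepFun_recursion (hx : ∀ j, Measurable (x j)) (indep : iIndepFun x P) (hF : Measurable F)
    (start : ∀ ω, S 0 ω = s) (succ : ∀ k ω, S (k + 1) ω = F (S k ω, x k ω)) (k : ℕ) :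
    IndepFun (S k) (x k) P := by
  have past_indep := indep_iSup_of_disjoint
    (m := fun j => MeasurableSpace.comap (x j) inferInstance) (fun j => (hx j).comap_le) indep
    (S := Iio k) (T := {k}) (by simp)
  rw [IndepFun_iff_Indep]
  refine indep_of_indep_of_le_left (indep_of_indep_of_le_right past_indep (by simp))
    (Measurable.comap_le (measurable_recursion hF start succ fun j hj => ?_))
  exact (comap_measurable (x j)).mono (le_iSup₂_of_le j hj le_rfl) le_rfl

lemma lintegral_prodMk_of_indepFun [IsFiniteMeasure P] {X : Ω → T} {Y : Ω → E}
    (hX : Measurable X) (hY : Measurable Y) (indep : IndepFun X Y P) {f : T × E → ℝ≥0∞}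
    (hf : Measurable f) :
    ∫⁻ ω, f (X ω, Y ω) ∂P = ∫⁻ ω, ∫⁻ y, f (X ω, y) ∂(P.map Y) ∂P := by
  rw [← lintegral_map hf (hX.prodMk hY),
    (indepFun_iff_map_prod_eq_prod_map_map hX.aemeasurable hY.aemeasurable).1 indep,
    lintegral_prod _ hf.aemeasurable, lintegral_map (Measurable.lintegral_prod_right' hf) hX]

lemma lintegral_recursion_succ [IsFiniteMeasure P] (hx : ∀ j, Measurable (x j))
    (indep : iIndepFun x P) (hF : Measurable F) (start : ∀ ω, S 0 ω = s)
    (succ : ∀ k ω, S (k + 1) ω = F (S k ω, x k ω)) {f : T → ℝ≥0∞} (hf : Measurable f) (k : ℕ) :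
    ∫⁻ ω, f (S (k + 1) ω) ∂P = ∫⁻ ω, ∫⁻ y, f (F (S k ω, y)) ∂(P.map (x k)) ∂P := by
  simp only [succ]
  exact lintegral_prodMk_of_indepFun (measurable_recursion hF start succ fun j _ => hx j) (hx k)
    (indepFun_recursion hx indep hF start succ k) (hf.comp hF)

end Recursion

section DiscreteInequality

variable {P : Measure Ω} {α h : ℝ} {x : ℕ → Ω → ℝ}

lemma lintegral_pathWeight_mul_moebius_le [IsFiniteMeasure P] (hh : 0 < h)
    (hx : ∀ j, Measurable (x j)) (indep : iIndepFun x P)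
    (law : ∀ j, P.map (x j) = gaussianReal (-(h / 2)) h.toNNReal) (n : ℕ) {g : ℝ × ℝ → ℝ≥0∞}
    (hg : Measurable g) :
    ∫⁻ ω, pathWeight α h (x · ω) n * g (moebius α (discretePath h (x · ω) n)) ∂P
      ≤ ∫⁻ ω, g (discretePath h (x · ω) n) ∂P := by
  set γ := gaussianReal (-(h / 2)) h.toNNReal
  induction n generalizing g with
  | zero => simp [pathWeight, discretePath, moebius]
  | succ n ih =>
    let nextMean (p : ℝ × ℝ) : ℝ≥0∞ := ∫⁻ y, g (discreteStep h p y) ∂γ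
    have nextMean_measurable : Measurable nextMean :=
      Measurable.lintegral_prod_right' (f := fun q : (ℝ × ℝ) × ℝ => g (discreteStep h q.1 q.2))
        (by fun_prop)
    calc
      _ = ∫⁻ ω, ∫⁻ y, pathWeight α h (x · ω) n * stepWeight α h (discretePath h (x · ω) n) y
            * g (moebius α (discreteStep h (discretePath h (x · ω) n) y)) ∂γ ∂P := by
        simpa only [law] using lintegral_recursion_succ
          (S := fun k ω => (pathWeight α h (x · ω) k, discretePath h (x · ω) k))
          (F := fun q : (ℝ≥0∞ × ℝ × ℝ) × ℝ =>
            (q.1.1 * stepWeight α h q.1.2 q.2, discreteStep h q.1.2 q.2))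
          (s := (1, 1, 0)) (f := fun q => q.1 * g (moebius α q.2)) hx indep (by fun_prop)
          (fun _ => by simp only [pathWeight, discretePath, Finset.range_zero, Finset.prod_empty])
          (fun k ω => by simp only [pathWeight, discretePath, Finset.prod_range_succ])
          (by fun_prop) n
      _ ≤ ∫⁻ ω, pathWeight α h (x · ω) n * nextMean (moebius α (discretePath h (x · ω) n)) ∂P := by
        refine lintegral_mono fun ω => ?_
        simp only [mul_assoc]
        rw [lintegral_const_mul _ (by fun_prop)]
        gcongr
        exact lintegral_stepWeight_mul_moebius_le hh _ hg
      _ ≤ ∫⁻ ω, nextMean (discretePath h (x · ω) n) ∂P := ih nextMean_measurable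
      _ = ∫⁻ ω, g (discretePath h (x · ω) (n + 1)) ∂P := by
        simpa only [law] using (lintegral_recursion_succ
          (S := fun k ω => discretePath h (x · ω) k) (F := fun q => discreteStep h q.1 q.2)
          hx indep (by fun_prop) (fun _ => rfl) (fun _ _ => rfl) hg n).symm

end DiscreteInequality

section StepError

variable {α h K x y : ℝ} {p : ℝ × ℝ}

lemma abs_sinh_sub_self_le (hx : |x| ≤ 1) : |sinh x - x| ≤ |x| ^ 3 := by
  have taylor := Real.exp_bound hx (n := 3) (by norm_num)
  have taylor_neg := Real.exp_bound (x := -x) (by rwa [abs_neg]) (n := 3) (by norm_num)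
  norm_num [Finset.sum_range_succ, Nat.factorial] at taylor taylor_neg
  have cube_nonneg : 0 ≤ |x| ^ 3 := by positivity
  rw [sinh_eq]
  rw [abs_le] at *
  constructor <;> linarith

lemma abs_sinh_mul_sinh_sub_mul_le (hx : |x| ≤ 1) (hy : |y| ≤ 1) :
    |sinh x * sinh y - x * y| ≤ 2 * (|x| * |y|) * (|x| ^ 2 + |y| ^ 2) := by
  have sinh_y : |sinh y| ≤ 2 * |y| := by
    have cube_le : |y| ^ 3 ≤ |y| := pow_le_of_le_one (abs_nonneg y) hy (by norm_num)
    linarith [abs_sub_abs_le_abs_sub (sinh y) y, abs_sinh_sub_self_le hy]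
  calc |sinh x * sinh y - x * y| = |(sinh x - x) * sinh y + x * (sinh y - y)| := by ring_nf
    _ ≤ |sinh x - x| * |sinh y| + |x| * |sinh y - y| := by
      simpa only [abs_mul] using abs_add_le ((sinh x - x) * sinh y) (x * (sinh y - y))
    _ ≤ |x| ^ 3 * (2 * |y|) + |x| * |y| ^ 3 := by
      gcongr
      exacts [abs_sinh_sub_self_le hx, abs_sinh_sub_self_le hy]
    _ ≤ 2 * (|x| * |y|) * (|x| ^ 2 + |y| ^ 2) := by
      have : 0 ≤ |x| * |y| ^ 3 := by positivity
      linarith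

lemma abs_log_one_add_le (hx : |x| ≤ 1 / 2) : |Real.log (1 + x)| ≤ 2 * |x| := by
  have bound := Real.abs_log_sub_add_sum_range_le (x := -x) (by rw [abs_neg]; linarith) 0
  rw [Finset.sum_range_zero, zero_add, zero_add, pow_one, abs_neg, sub_neg_eq_add] at bound
  refine bound.trans ?_
  rw [div_le_iff₀ (by linarith)]
  nlinarith [abs_nonneg x]

lemma abs_logDenomIncrement_le (hh : 0 < h) (hp : 0 < 1 + α * p.2)
    (hK : |α * p.1 * rexp (x / 2)| ≤ K * (1 + α * p.2)) (hKh : K * h ≤ 1 / 2) :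
    0 < 1 + α * (discreteStep h p x).2 ∧ |logDenomIncrement α h p x| ≤ 2 * (K * h) := by
  set u := h * (α * p.1 / (1 + α * p.2)) * rexp (x / 2)
  have hu : |u| ≤ K * h := by
    have : u = h * (α * p.1 * rexp (x / 2)) / (1 + α * p.2) := by ring
    rw [this, abs_div, abs_mul, abs_of_pos hp, abs_of_pos hh, div_le_iff₀ hp]
    nlinarith
  have ratio : 1 + α * (discreteStep h p x).2 = (1 + α * p.2) * (1 + u) :=
    one_add_mul_discreteStep_snd hp.ne'
  rw [logDenomIncrement, ratio, mul_div_cancel_left₀ _ hp.ne']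
  exact ⟨mul_pos hp (by linarith [neg_abs_le u]),
    (abs_log_one_add_le (hu.trans hKh)).trans (by linarith)⟩

lemma abs_stepLogWeight_sub_le (hh : 0 < h) (hp : 0 < 1 + α * p.2)
    (hK : |α * p.1 * rexp (x / 2)| ≤ K * (1 + α * p.2)) (hKh : K * h ≤ 1 / 2) (hx : |x| ≤ 1) :
    |stepLogWeight α h p x - (moebiusLogDensity α (discreteStep h p x) - moebiusLogDensity α p)|
      ≤ 4 * K * (|x| + 2 * (K * h)) ^ 3 := by
  obtain ⟨hq, hL⟩ := abs_logDenomIncrement_le hh hp hK hKh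
  rw [moebiusLogDensity_discreteStep_sub hh.ne' hp hq, stepLogWeight]
  set L := logDenomIncrement α h p x
  set s := |x| + 2 * (K * h)
  have hLs : |L| ≤ s := hL.trans (le_add_of_nonneg_left (abs_nonneg x))
  have hxLs : |x - L| ≤ s := (abs_sub x L).trans (add_le_add_right hL _)
  have hL1 : |L / 2| ≤ 1 := by rw [abs_div, abs_two]; linarith
  have hxL1 : |(x - L) / 2| ≤ 1 := by rw [abs_div, abs_two]; linarith
  have bound := abs_sinh_mul_sinh_sub_mul_le hL1 hxL1
  have factor : 2 * L * (x - L) / h - 8 / h * (sinh (L / 2) * sinh ((x - L) / 2))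
      = -(8 / h * (sinh (L / 2) * sinh ((x - L) / 2) - L / 2 * ((x - L) / 2))) := by ring
  rw [factor, abs_neg, abs_mul, abs_of_pos (by positivity)]
  calc 8 / h * |sinh (L / 2) * sinh ((x - L) / 2) - L / 2 * ((x - L) / 2)|
      ≤ 8 / h * (2 * (|L / 2| * |(x - L) / 2|) * (|L / 2| ^ 2 + |(x - L) / 2| ^ 2)) := by gcongr
    _ = |L| * |x - L| * (|L| ^ 2 + |x - L| ^ 2) / h := by
      simp only [abs_div, abs_two]
      ring
    _ ≤ 2 * (K * h) * s * (s ^ 2 + s ^ 2) / h := by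
      have := (abs_nonneg L).trans hL
      have := (abs_nonneg L).trans hLs
      gcongr
    _ = 4 * K * s ^ 3 := by
      field_simp
      ring

end StepError

section PathError

variable {α h K : ℝ} {x : ℕ → ℝ} {n : ℕ}

lemma pathWeight_eq_ofReal_exp_sum (hZ : ∀ k ≤ n, 0 < 1 + α * (discretePath h x k).2) :
    pathWeight α h x n = ENNReal.ofReal
      (rexp (∑ k ∈ Finset.range n, stepLogWeight α h (discretePath h x k) (x k))) := by
  rw [pathWeight, Real.exp_sum, ENNReal.ofReal_prod_of_nonneg fun _ _ => (exp_pos _).le]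
  refine Finset.prod_congr rfl fun k hk => ?_
  have hk := Finset.mem_range.1 hk
  exact indicator_of_mem (by exact ⟨hZ k hk.le, hZ (k + 1) hk⟩) _

lemma abs_sum_stepLogWeight_sub_le (hh : 0 < h) (hK₀ : 0 ≤ K) (hKh : K * h ≤ 1 / 2)
    (hZ : ∀ k < n, 0 < 1 + α * (discretePath h x k).2)
    (hK : ∀ k < n, |α * (discretePath h x k).1 * rexp (x k / 2)|
      ≤ K * (1 + α * (discretePath h x k).2))
    (hx : ∑ k ∈ Finset.range n, |x k| ^ 3 ≤ 1) :
    |∑ k ∈ Finset.range n, stepLogWeight α h (discretePath h x k) (x k)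
        - moebiusLogDensity α (discretePath h x n)|
      ≤ 16 * K * (∑ k ∈ Finset.range n, |x k| ^ 3 + 8 * K ^ 3 * h ^ 2 * (n * h)) := by
  have start : moebiusLogDensity α (discretePath h x 0) = 0 := by
    simp [moebiusLogDensity, discretePath]
  have telescope := Finset.sum_range_sub (fun k => moebiusLogDensity α (discretePath h x k)) n
  rw [start, sub_zero] at telescope
  rw [← telescope, ← Finset.sum_sub_distrib]
  have step_le : ∀ k ∈ Finset.range n, |stepLogWeight α h (discretePath h x k) (x k)
      - (moebiusLogDensity α (discretePath h x (k + 1)) - moebiusLogDensity α (discretePath h x k))|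
      ≤ 16 * K * (|x k| ^ 3 + 8 * K ^ 3 * h ^ 2 * h) := by
    intro k hk
    have cube_le : |x k| ^ 3 ≤ 1 :=
      (Finset.single_le_sum (f := fun k => |x k| ^ 3) (fun _ _ => by positivity) hk).trans hx
    have hxk : |x k| ≤ 1 := (pow_le_one_iff_of_nonneg (abs_nonneg _) three_ne_zero).1 cube_le
    have hk := Finset.mem_range.1 hk
    have power_mean := add_pow_le (abs_nonneg (x k)) (by positivity : 0 ≤ 2 * (K * h)) 3
    calc _ ≤ 4 * K * (|x k| + 2 * (K * h)) ^ 3 :=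
          abs_stepLogWeight_sub_le hh (hZ k hk) (hK k hk) hKh hxk
      _ ≤ 4 * K * (2 ^ (3 - 1) * (|x k| ^ 3 + (2 * (K * h)) ^ 3)) := by gcongr
      _ = 16 * K * (|x k| ^ 3 + 8 * K ^ 3 * h ^ 2 * h) := by ring
  refine (Finset.abs_sum_le_sum_abs _ _).trans ((Finset.sum_le_sum step_le).trans_eq ?_)
  rw [← Finset.mul_sum, Finset.sum_add_distrib, Finset.sum_const, Finset.card_range, nsmul_eq_mul]
  ring

end PathError

section RiemannSum

/-- The step of the partition of `[0, t]` into `n + 1` equal parts. -/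
def mesh (t : ℝ) (n : ℕ) : ℝ := t / (n + 1)

/-- The increment of `X` over the `k`-th interval of the partition of step `h`. -/
def increment (X : ℝ → ℝ) (h : ℝ) (k : ℕ) : ℝ := X ((k + 1 : ℕ) * h) - X (k * h)

variable {t : ℝ} {k n : ℕ}

lemma mesh_pos (ht : 0 < t) (n : ℕ) : 0 < mesh t n := by
  unfold mesh
  positivity

lemma succ_mul_mesh (t : ℝ) (n : ℕ) : ((n + 1 : ℕ) : ℝ) * mesh t n = t := by
  unfold mesh
  push_cast
  field_simp

lemma tendsto_mesh (t : ℝ) : Tendsto (mesh t) atTop (𝓝 0) := by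
  have shifted := (tendsto_const_div_atTop_nhds_zero_nat t).comp (tendsto_add_atTop_nat 1)
  exact shifted.congr fun n => by simp [mesh]

lemma mul_mesh_mem_Icc (ht : 0 < t) (hk : k ≤ n + 1) : k * mesh t n ∈ Icc 0 t := by
  have h_pos := mesh_pos ht n
  have : (k : ℝ) ≤ (n + 1 : ℕ) := by exact_mod_cast hk
  exact ⟨by positivity, (by gcongr : _ ≤ _).trans_eq (succ_mul_mesh t n)⟩

variable {E : Type*} [NormedAddCommGroup E] [NormedSpace ℝ E] [CompleteSpace E]

lemma norm_smul_sub_intervalIntegral_le {a b ε : ℝ} (hab : a ≤ b) {f : ℝ → E} {y : E}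
    (hf : IntervalIntegrable f volume a b) (hε : ∀ s ∈ Icc a b, ‖y - f s‖ ≤ ε) :
    ‖(b - a) • y - ∫ s in a..b, f s‖ ≤ ε * (b - a) := by
  rw [← intervalIntegral.integral_const, ← intervalIntegral.integral_sub (by simp) hf]
  refine (intervalIntegral.norm_integral_le_of_norm_le_const fun s hs => ?_).trans_eq
    (by rw [abs_of_nonneg (sub_nonneg.2 hab)])
  rw [uIoc_of_le hab] at hs
  exact hε s ⟨hs.1.le, hs.2⟩

lemma norm_sum_mesh_smul_sub_intervalIntegral_le (ht : 0 < t) {F : ℝ × ℝ → E} (hF : Continuous F)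
    {ε : ℝ} (close : ∀ p ∈ Icc 0 t ×ˢ Icc 0 t, ∀ q ∈ Icc 0 t ×ˢ Icc 0 t,
      dist p q ≤ mesh t n → dist (F p) (F q) ≤ ε) :
    ‖∑ k ∈ Finset.range (n + 1), mesh t n • F (k * mesh t n, (k + 1 : ℕ) * mesh t n)
      - ∫ s in 0..t, F (s, s)‖ ≤ ε * t := by
  set h := mesh t n
  have integrable (a b : ℝ) : IntervalIntegrable (fun s => F (s, s)) volume a b :=
    (by fun_prop : Continuous fun s => F (s, s)).intervalIntegrable a b
  have split : ∫ s in 0..t, F (s, s)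
      = ∑ k ∈ Finset.range (n + 1), ∫ s in k * h..(k + 1 : ℕ) * h, F (s, s) := by
    rw [intervalIntegral.sum_integral_adjacent_intervals (a := fun k : ℕ => k * h)
      fun _ _ => integrable _ _, succ_mul_mesh, Nat.cast_zero, zero_mul]
  have cell_le : ∀ k ∈ Finset.range (n + 1),
      ‖h • F (k * h, (k + 1 : ℕ) * h) - ∫ s in k * h..(k + 1 : ℕ) * h, F (s, s)‖ ≤ ε * h := by
    intro k hk
    have hk := Finset.mem_range.1 hk
    have left := mul_mesh_mem_Icc ht hk.le
    have right := mul_mesh_mem_Icc (k := k + 1) ht hk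
    have width : (k + 1 : ℕ) * h - k * h = h := by push_cast; ring
    have ordered : k * h ≤ (k + 1 : ℕ) * h := by linarith [mesh_pos ht n]
    suffices ∀ s ∈ Icc (k * h) ((k + 1 : ℕ) * h), ‖F (k * h, (k + 1 : ℕ) * h) - F (s, s)‖ ≤ ε by
      simpa only [width] using norm_smul_sub_intervalIntegral_le ordered (integrable _ _) this
    intro s hs
    have hs_mem : s ∈ Icc 0 t := ⟨left.1.trans hs.1, hs.2.trans right.2⟩
    rw [← dist_eq_norm]
    refine close _ ⟨left, right⟩ _ ⟨hs_mem, hs_mem⟩ ?_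
    rw [Prod.dist_eq, max_le_iff, dist_comm, Real.dist_eq, Real.dist_eq,
      abs_of_nonneg (sub_nonneg.2 hs.1), abs_of_nonneg (sub_nonneg.2 hs.2)]
    exact ⟨by linarith [hs.2], by linarith [hs.1]⟩
  rw [split, ← Finset.sum_sub_distrib]
  refine (norm_sum_le_of_le _ cell_le).trans_eq ?_
  rw [Finset.sum_const, Finset.card_range, nsmul_eq_mul, mul_left_comm, succ_mul_mesh]

lemma tendsto_sum_mesh_smul (ht : 0 < t) {F : ℝ × ℝ → E} (hF : Continuous F) :
    Tendsto (fun n : ℕ => ∑ k ∈ Finset.range (n + 1),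
        mesh t n • F (k * mesh t n, (k + 1 : ℕ) * mesh t n))
      atTop (𝓝 (∫ s in 0..t, F (s, s))) := by
  have uniform : UniformContinuousOn F (Icc 0 t ×ˢ Icc 0 t) :=
    (isCompact_Icc.prod isCompact_Icc).uniformContinuousOn_of_continuous hF.continuousOn
  rw [Metric.tendsto_nhds]
  intro ε hε
  obtain ⟨δ, hδ, close⟩ := Metric.uniformContinuousOn_iff.1 uniform (ε / (2 * t)) (by positivity)
  filter_upwards [(tendsto_mesh t).eventually (gt_mem_nhds hδ)] with n hn
  rw [dist_eq_norm]
  calc _ ≤ ε / (2 * t) * t := norm_sum_mesh_smul_sub_intervalIntegral_le ht hF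
        fun p hp q hq hpq => (close p hp q hq (hpq.trans_lt hn)).le
    _ = ε / 2 := by field_simp
    _ < ε := half_lt_self hε

end RiemannSum

section PathLimit

variable {X : ℝ → ℝ} {α h t : ℝ}

lemma discretePath_increment (hX₀ : X 0 = 0) (h : ℝ) (k : ℕ) :
    discretePath h (increment X h) k
      = (rexp (X (k * h)),
        ∑ j ∈ Finset.range k, h * rexp ((X (j * h) + X ((j + 1 : ℕ) * h)) / 2)) := by
  induction k with
  | zero => simp [discretePath, hX₀]
  | succ k ih =>
    rw [discretePath, ih, discreteStep, increment, ← Real.exp_add, ← Real.exp_add,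
      Finset.sum_range_succ]
    ring_nf

lemma monotone_discretePath_snd (hX₀ : X 0 = 0) (hh : 0 < h) :
    Monotone fun k => (discretePath h (increment X h) k).2 := by
  simp only [discretePath_increment hX₀]
  exact monotone_nat_of_le_succ fun k => by
    rw [Finset.sum_range_succ]
    exact le_add_of_nonneg_right (by positivity)

lemma min_one_le_one_add_mul_discretePath_snd (hX₀ : X 0 = 0) (hh : 0 < h) {k n : ℕ}
    (hk : k ≤ n) :
    min 1 (1 + α * (discretePath h (increment X h) n).2)
      ≤ 1 + α * (discretePath h (increment X h) k).2 := by
  have mono := monotone_discretePath_snd hX₀ hh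
  rcases le_total 0 α with hα | hα
  · have nonneg : 0 ≤ (discretePath h (increment X h) k).2 := mono k.zero_le
    exact min_le_of_left_le (le_add_of_nonneg_right (mul_nonneg hα nonneg))
  · exact min_le_of_right_le (add_le_add_right (mul_le_mul_of_nonpos_left (mono hk) hα) 1)

lemma tendsto_discretePath (hX : Continuous X) (hX₀ : X 0 = 0) (ht : 0 < t) :
    Tendsto (fun n => discretePath (mesh t n) (increment X (mesh t n)) (n + 1)) atTop
      (𝓝 (rexp (X t), ∫ s in 0..t, rexp (X s))) := by
  simp only [discretePath_increment hX₀, succ_mul_mesh]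
  refine tendsto_const_nhds.prodMk_nhds ?_
  have riemann := tendsto_sum_mesh_smul ht (F := fun q => rexp ((X q.1 + X q.2) / 2))
    (by fun_prop)
  simpa only [add_self_div_two, smul_eq_mul] using riemann

lemma exists_eventually_pos_and_abs_mul_le (hX : Continuous X) (hX₀ : X 0 = 0) (ht : 0 < t)
    (hα : 0 < 1 + α * ∫ s in 0..t, rexp (X s)) :
    ∃ K ≥ 0, ∀ᶠ n : ℕ in atTop, ∀ k ≤ n + 1,
      0 < 1 + α * (discretePath (mesh t n) (increment X (mesh t n)) k).2 ∧
      (k < n + 1 → |α * (discretePath (mesh t n) (increment X (mesh t n)) k).1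
          * rexp (increment X (mesh t n) k / 2)|
        ≤ K * (1 + α * (discretePath (mesh t n) (increment X (mesh t n)) k).2)) := by
  obtain ⟨c, hc⟩ := isCompact_Icc.bddAbove_image (f := X) (K := Icc 0 t) hX.continuousOn
  have X_le {s : ℝ} (hs : s ∈ Icc 0 t) : X s ≤ c := hc ⟨s, hs, rfl⟩
  set z := (1 + α * ∫ s in 0..t, rexp (X s)) / 2 with hz
  have denom_pos : 0 < min 1 z := lt_min one_pos (half_pos hα)
  have denom_tendsto : Tendsto (fun n =>
      1 + α * (discretePath (mesh t n) (increment X (mesh t n)) (n + 1)).2) atTop (𝓝 (2 * z)) := by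
    rw [hz, mul_div_cancel₀ _ two_ne_zero]
    exact ((tendsto_discretePath hX hX₀ ht).snd_nhds.const_mul α).const_add 1
  refine ⟨|α| * rexp c / min 1 z, by positivity, ?_⟩
  filter_upwards [denom_tendsto.eventually_const_lt (by linarith : z < 2 * z)] with n hn k hk
  have denom_ge := (min_le_min_left 1 hn.le).trans
    (min_one_le_one_add_mul_discretePath_snd hX₀ (mesh_pos ht n) hk)
  refine ⟨denom_pos.trans_le denom_ge, fun hk' => ?_⟩
  calc _ = |α| * rexp ((X (k * mesh t n) + X ((k + 1 : ℕ) * mesh t n)) / 2) := by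
        rw [discretePath_increment hX₀, increment, mul_assoc, ← Real.exp_add, abs_mul,
          abs_of_pos (exp_pos _)]
        ring_nf
    _ ≤ |α| * rexp c := by
      have := X_le (mul_mesh_mem_Icc ht hk)
      have := X_le (mul_mesh_mem_Icc (k := k + 1) ht hk')
      gcongr
      linarith
    _ = |α| * rexp c / min 1 z * min 1 z := (div_mul_cancel₀ _ denom_pos.ne').symm
    _ ≤ _ := by gcongr

lemma tendsto_sum_stepLogWeight_sub (hX : Continuous X) (hX₀ : X 0 = 0) (ht : 0 < t)
    (hα : 0 < 1 + α * ∫ s in 0..t, rexp (X s)) {l : Filter ℕ} (hl : l ≤ atTop)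
    (cubes : Tendsto (fun n => ∑ k ∈ Finset.range (n + 1), |increment X (mesh t n) k| ^ 3) l
      (𝓝 0)) :
    Tendsto (fun n => ∑ k ∈ Finset.range (n + 1),
        stepLogWeight α (mesh t n) (discretePath (mesh t n) (increment X (mesh t n)) k)
          (increment X (mesh t n) k)
        - moebiusLogDensity α (discretePath (mesh t n) (increment X (mesh t n)) (n + 1)))
      l (𝓝 0) := by
  obtain ⟨K, hK, domain⟩ := exists_eventually_pos_and_abs_mul_le hX hX₀ ht hα
  have mesh_tendsto : Tendsto (mesh t) l (𝓝 0) := (tendsto_mesh t).mono_left hl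
  have error_tendsto : Tendsto (fun n =>
      16 * K * (∑ k ∈ Finset.range (n + 1), |increment X (mesh t n) k| ^ 3
        + 8 * K ^ 3 * mesh t n ^ 2 * t)) l (𝓝 0) := by
    simpa using (cubes.add (((mesh_tendsto.pow 2).const_mul (8 * K ^ 3)).mul_const t)).const_mul
      (16 * K)
  have small_mesh : ∀ᶠ n in l, K * mesh t n ≤ 1 / 2 := by
    have : Tendsto (fun n => K * mesh t n) l (𝓝 0) := by simpa using mesh_tendsto.const_mul K
    exact this.eventually_le_const (by norm_num)
  refine squeeze_zero_norm' ?_ error_tendsto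
  filter_upwards [hl domain, small_mesh, cubes.eventually_le_const one_pos]
    with n domain small_mesh cubes_le
  simpa only [succ_mul_mesh, Real.norm_eq_abs] using abs_sum_stepLogWeight_sub_le
    (mesh_pos ht n) hK small_mesh (fun k hk => (domain k hk.le).1)
    (fun k hk => (domain k hk.le).2 hk) cubes_le

lemma tendsto_pathWeight (hX : Continuous X) (hX₀ : X 0 = 0) (ht : 0 < t)
    (hα : 0 < 1 + α * ∫ s in 0..t, rexp (X s)) {l : Filter ℕ} (hl : l ≤ atTop)
    (cubes : Tendsto (fun n => ∑ k ∈ Finset.range (n + 1), |increment X (mesh t n) k| ^ 3) l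
      (𝓝 0)) :
    Tendsto (fun n => pathWeight α (mesh t n) (increment X (mesh t n)) (n + 1)) l
      (𝓝 (moebiusDensity α (rexp (X t), ∫ s in 0..t, rexp (X s)))) := by
  obtain ⟨_, _, domain⟩ := exists_eventually_pos_and_abs_mul_le hX hX₀ ht hα
  have logDensity_tendsto := ((continuousAt_moebiusLogDensity (by exact hα.ne')).tendsto.comp
    (tendsto_discretePath hX hX₀ ht)).mono_left hl
  have logWeight_tendsto :=
    (tendsto_sum_stepLogWeight_sub hX hX₀ ht hα hl cubes).add logDensity_tendsto
  rw [zero_add] at logWeight_tendsto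
  rw [moebiusDensity, indicator_of_mem (by exact hα)]
  refine (ENNReal.tendsto_ofReal logWeight_tendsto.rexp).congr' ?_
  filter_upwards [hl domain] with n domain
  rw [pathWeight_eq_ofReal_exp_sum fun k hk => (domain k hk).1, Function.comp_apply,
    sub_add_cancel]

end PathLimit

section GaussianMoment

variable {h t : ℝ}

lemma gaussianReal_neg_half_eq_map (hh : 0 ≤ h) :
    gaussianReal (-(h / 2)) h.toNNReal = (gaussianReal 0 1).map (fun y => √h * y - h / 2) := by
  have comp : (fun y => √h * y - h / 2) = (fun y => y - h / 2) ∘ (fun y => √h * y) := rfl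
  have variance : .mk (√h ^ 2) (sq_nonneg _) = h.toNNReal := by
    ext
    rw [NNReal.coe_mk, Real.sq_sqrt hh, coe_toNNReal h hh]
  rw [comp, ← Measure.map_map (by fun_prop) (by fun_prop), gaussianReal_map_const_mul,
    gaussianReal_map_sub_const, mul_zero, zero_sub, mul_one, variance]

lemma lintegral_abs_pow_gaussianReal_le (hh : 0 ≤ h) (hht : h ≤ t) (q : ℕ) :
    ∫⁻ y, ENNReal.ofReal (|y| ^ q) ∂gaussianReal (-(h / 2)) h.toNNReal
      ≤ ENNReal.ofReal (√h ^ q) * ∫⁻ y, ENNReal.ofReal ((|y| + √t) ^ q) ∂gaussianReal 0 1 := by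
  rw [gaussianReal_neg_half_eq_map hh, lintegral_map (by fun_prop) (by fun_prop),
    ← lintegral_const_mul _ (by fun_prop)]
  refine lintegral_mono fun y => ?_
  rw [← ENNReal.ofReal_mul (by positivity), ← mul_pow]
  gcongr
  calc |√h * y - h / 2| ≤ |√h * y| + |h / 2| := abs_sub _ _
    _ = √h * |y| + √h * √h / 2 := by
      rw [abs_mul, abs_of_nonneg (sqrt_nonneg h), abs_of_nonneg (div_nonneg hh zero_le_two),
        mul_self_sqrt hh]
    _ ≤ √h * |y| + √h * √t := by
      have := mul_le_mul_of_nonneg_left (sqrt_le_sqrt hht) (sqrt_nonneg h)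
      linarith [mul_self_nonneg √h]
    _ = √h * (|y| + √t) := (mul_add _ _ _).symm

lemma lintegral_abs_add_pow_gaussianReal_lt_top (m : ℝ) (v : ℝ≥0) (c : ℝ) (q : ℕ) :
    ∫⁻ y, ENNReal.ofReal ((|y| + c) ^ q) ∂gaussianReal m v < ⊤ := by
  have memLp : MemLp (fun y : ℝ => |y| + c) q (gaussianReal m v) :=
    (memLp_id_gaussianReal' q (ENNReal.natCast_ne_top q)).norm.add (memLp_const _)
  refine (lintegral_mono fun y => ?_).trans_lt memLp.integrable_norm_pow'.lintegral_lt_top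
  exact ENNReal.ofReal_le_ofReal ((le_abs_self _).trans_eq (abs_pow _ _))

end GaussianMoment

section BrownianPath

variable {P B} {h t : ℝ}

/-- The path `s ↦ log M_s = B_s - s / 2`. -/
def logPath (B : ℝ → Ω → ℝ) (ω : Ω) (s : ℝ) : ℝ := B s ω - s / 2

omit [MeasurableSpace Ω] in
lemma increment_logPath (B : ℝ → Ω → ℝ) (ω : Ω) (h : ℝ) (k : ℕ) :
    increment (logPath B ω) h k = B ((k + 1 : ℕ) * h) ω - B (k * h) ω - h / 2 := by
  simp only [increment, logPath]
  push_cast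
  ring

namespace IsBrownianMotion

lemma continuous_logPath (hB : IsBrownianMotion P B) (ω : Ω) : Continuous (logPath B ω) :=
  (hB.continuous_paths ω).sub (by fun_prop)

lemma logPath_zero (hB : IsBrownianMotion P B) (ω : Ω) : logPath B ω 0 = 0 := by
  simp [logPath, hB.start]

lemma measurable_logPath (hB : IsBrownianMotion P B) (s : ℝ) : Measurable (logPath B · s) :=
  (hB.measurable s).sub_const _

lemma measurable_increment_logPath (hB : IsBrownianMotion P B) (h : ℝ) (k : ℕ) :
    Measurable fun ω => increment (logPath B ω) h k :=
  (hB.measurable_logPath _).sub (hB.measurable_logPath _)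

lemma map_increment_logPath (hB : IsBrownianMotion P B) (hh : 0 ≤ h) (k : ℕ) :
    P.map (fun ω => increment (logPath B ω) h k) = gaussianReal (-(h / 2)) h.toNNReal := by
  have law := hB.gaussian_increments (k * h) ((k + 1 : ℕ) * h) (by positivity)
    (by push_cast; linarith)
  have width : ((k + 1 : ℕ) : ℝ) * h - k * h = h := by
    push_cast
    ring
  rw [width] at law
  simp only [increment_logPath]
  rw [← zero_sub, ← gaussianReal_map_sub_const, ← law]
  exact (Measure.map_map (measurable_id.sub_const _) ((hB.measurable _).sub (hB.measurable _))).symm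

lemma iIndepFun_increment_logPath (hB : IsBrownianMotion P B) (hh : 0 ≤ h) :
    iIndepFun (fun k ω => increment (logPath B ω) h k) P := by
  have indep := hB.indep_increments (fun k => k * h)
    (fun _ _ hjk => mul_le_mul_of_nonneg_right (Nat.cast_le.2 hjk) hh) (by simp)
  simp only [increment_logPath]
  exact indep.comp (fun _ y => y - h / 2) (fun _ => by fun_prop)

lemma measurable_M (hB : IsBrownianMotion P B) (t : ℝ) : Measurable (M B t) :=
  (hB.measurable_logPath t).exp

lemma ae_M_ne (hB : IsBrownianMotion P B) (ht : 0 < t) (b : ℝ) : ∀ᵐ ω ∂P, M B t ω ≠ b := by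
  have law := hB.gaussian_increments 0 t le_rfl ht.le
  simp only [hB.start, sub_zero] at law
  have : NullSingletonClass (P.map (B t)) := by
    rw [law]
    exact nullSingletonClass_gaussianReal (by simpa using ht)
  filter_upwards [ae_of_ae_map (hB.measurable t).aemeasurable
    (Measure.ae_ne (P.map (B t)) (Real.log b + t / 2))] with ω hω hM
  refine hω ?_
  rw [← hM, M, log_exp, sub_add_cancel]

lemma A_pos (hB : IsBrownianMotion P B) (ht : 0 < t) (ω : Ω) : 0 < A B t ω :=
  intervalIntegral.intervalIntegral_pos_of_pos
    ((hB.continuous_logPath ω).rexp.intervalIntegrable 0 t) (fun _ => exp_pos _) ht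

end IsBrownianMotion

end BrownianPath

section DiscreteMeasurability

variable {α h : ℝ} {x : ℕ → Ω → ℝ}

lemma measurable_discretePath (hx : ∀ j, Measurable (x j)) (n : ℕ) :
    Measurable fun ω => discretePath h (x · ω) n :=
  measurable_recursion (F := fun q => discreteStep h q.1 q.2)
    (S := fun k ω => discretePath h (x · ω) k) (by fun_prop) (fun _ => rfl) (fun _ _ => rfl)
    fun j _ => hx j

lemma measurable_pathWeight (hx : ∀ j, Measurable (x j)) (n : ℕ) :
    Measurable fun ω => pathWeight α h (x · ω) n :=
  Finset.measurable_fun_prod _ fun k _ =>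
    measurable_stepWeight.comp ((measurable_discretePath hx k).prodMk (hx k))

end DiscreteMeasurability

section BrownianLimit

variable {P B} {t : ℝ}

namespace IsBrownianMotion

lemma tendsto_discretePath (hB : IsBrownianMotion P B) (ht : 0 < t) (ω : Ω) :
    Tendsto (fun n => discretePath (mesh t n) (increment (logPath B ω) (mesh t n)) (n + 1)) atTop
      (𝓝 (M B t ω, A B t ω)) :=
  _root_.tendsto_discretePath (hB.continuous_logPath ω) (hB.logPath_zero ω) ht

lemma measurable_A (hB : IsBrownianMotion P B) (ht : 0 < t) : Measurable (A B t) :=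
  measurable_of_tendsto_metrizable
    (fun n => (measurable_discretePath (hB.measurable_increment_logPath (mesh t n)) (n + 1)).snd)
    (tendsto_pi_nhds.2 fun ω => (hB.tendsto_discretePath ht ω).snd_nhds)

lemma measurable_M_prodMk_A (hB : IsBrownianMotion P B) (ht : 0 < t) :
    Measurable fun ω => (M B t ω, A B t ω) :=
  (hB.measurable_M t).prodMk (hB.measurable_A ht)

lemma eLpNorm_sum_abs_increment_pow_three_le (hB : IsBrownianMotion P B) (ht : 0 < t) (n : ℕ) :
    eLpNorm (fun ω => ∑ k ∈ Finset.range (n + 1), |increment (logPath B ω) (mesh t n) k| ^ 3) 1 P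
      ≤ ENNReal.ofReal (t * √(mesh t n))
        * ∫⁻ y, ENNReal.ofReal ((|y| + √t) ^ 3) ∂gaussianReal 0 1 := by
  have h_pos := mesh_pos ht n
  have h_le : mesh t n ≤ t := by
    simpa using (mul_mesh_mem_Icc ht (k := 1) (n := n) (by omega)).2
  have incr_meas := hB.measurable_increment_logPath (mesh t n)
  have cube_le (k : ℕ) : ∫⁻ ω, ENNReal.ofReal (|increment (logPath B ω) (mesh t n) k| ^ 3) ∂P
      ≤ ENNReal.ofReal (√(mesh t n) ^ 3)
        * ∫⁻ y, ENNReal.ofReal ((|y| + √t) ^ 3) ∂gaussianReal 0 1 := by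
    rw [← lintegral_map (f := fun y => ENNReal.ofReal (|y| ^ 3)) (by fun_prop) (incr_meas k),
      hB.map_increment_logPath h_pos.le]
    exact lintegral_abs_pow_gaussianReal_le h_pos.le h_le 3
  have scale : (n + 1 : ℕ) * √(mesh t n) ^ 3 = t * √(mesh t n) := by
    rw [pow_succ, Real.sq_sqrt h_pos.le, ← mul_assoc, succ_mul_mesh]
  calc _ = ∑ k ∈ Finset.range (n + 1),
          ∫⁻ ω, ENNReal.ofReal (|increment (logPath B ω) (mesh t n) k| ^ 3) ∂P := by
        rw [eLpNorm_one_eq_lintegral_enorm, ← lintegral_finsetSum _ fun k _ => by fun_prop]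
        refine lintegral_congr fun ω => ?_
        rw [Real.enorm_of_nonneg (Finset.sum_nonneg fun _ _ => by positivity),
          ENNReal.ofReal_sum_of_nonneg fun _ _ => by positivity]
    _ ≤ _ := Finset.sum_le_sum fun k _ => cube_le k
    _ = _ := by
        rw [Finset.sum_const, Finset.card_range, nsmul_eq_mul, ← mul_assoc, ← scale,
          ENNReal.ofReal_mul (by positivity), ENNReal.ofReal_natCast]

lemma exists_subseq_tendsto_sum_abs_increment_pow_three (hB : IsBrownianMotion P B)
    (ht : 0 < t) :
    ∃ ns : ℕ → ℕ, StrictMono ns ∧ ∀ᵐ ω ∂P, Tendsto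
      (fun i => ∑ k ∈ Finset.range (ns i + 1),
        |increment (logPath B ω) (mesh t (ns i)) k| ^ 3) atTop (𝓝 0) := by
  have cubes_meas (n : ℕ) : Measurable fun ω =>
      ∑ k ∈ Finset.range (n + 1), |increment (logPath B ω) (mesh t n) k| ^ 3 :=
    Finset.measurable_fun_sum _ fun k _ =>
      (hB.measurable_increment_logPath (mesh t n) k).abs.pow_const 3
  have bound_tendsto : Tendsto (fun n => ENNReal.ofReal (t * √(mesh t n))
      * ∫⁻ y, ENNReal.ofReal ((|y| + √t) ^ 3) ∂gaussianReal 0 1) atTop (𝓝 0) := by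
    have sqrt_tendsto := (tendsto_mesh t).sqrt.const_mul t
    rw [Real.sqrt_zero, mul_zero] at sqrt_tendsto
    simpa using ENNReal.Tendsto.mul_const (ENNReal.tendsto_ofReal sqrt_tendsto)
      (Or.inr (lintegral_abs_add_pow_gaussianReal_lt_top 0 1 √t 3).ne)
  have cubes_tendsto := tendsto_of_tendsto_of_tendsto_of_le_of_le tendsto_const_nhds bound_tendsto
    (fun _ => zero_le) (hB.eLpNorm_sum_abs_increment_pow_three_le ht)
  have in_measure : TendstoInMeasure P (fun n ω =>
      ∑ k ∈ Finset.range (n + 1), |increment (logPath B ω) (mesh t n) k| ^ 3) atTop 0 :=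
    tendstoInMeasure_of_tendsto_eLpNorm one_ne_zero (fun n => (cubes_meas n).aestronglyMeasurable)
      aestronglyMeasurable_zero (by simpa only [sub_zero] using cubes_tendsto)
  exact in_measure.exists_seq_tendsto_ae

lemma tendsto_lintegral_discretePath (hB : IsBrownianMotion P B) (ht : 0 < t)
    (G : ℝ × ℝ →ᵇ ℝ≥0) :
    Tendsto (fun n => ∫⁻ ω,
        G (discretePath (mesh t n) (increment (logPath B ω) (mesh t n)) (n + 1)) ∂P) atTop
      (𝓝 (∫⁻ ω, G (M B t ω, A B t ω) ∂P)) := by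
  have := hB.isProbabilityMeasure
  refine tendsto_lintegral_of_dominated_convergence (fun _ => (nndist G 0 : ℝ≥0∞))
    (fun n => G.measurable_coe_ennreal_comp.comp
      (measurable_discretePath (hB.measurable_increment_logPath (mesh t n)) (n + 1)))
    (fun n => .of_forall fun ω => ?_) (by simp) (.of_forall fun ω => ?_)
  · exact ENNReal.coe_le_coe.2 (BoundedContinuousFunction.NNReal.upper_bound G _)
  · exact ENNReal.tendsto_coe.2 ((G.continuous.tendsto _).comp (hB.tendsto_discretePath ht ω))

lemma tendsto_pathWeight_mul (hB : IsBrownianMotion P B) (ht : 0 < t) {α : ℝ} {ω : Ω}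
    (hα : 0 < 1 + α * A B t ω) (G : ℝ × ℝ →ᵇ ℝ≥0) {ns : ℕ → ℕ} (hns : StrictMono ns)
    (cubes : Tendsto (fun i => ∑ k ∈ Finset.range (ns i + 1),
      |increment (logPath B ω) (mesh t (ns i)) k| ^ 3) atTop (𝓝 0)) :
    Tendsto (fun i =>
        pathWeight α (mesh t (ns i)) (increment (logPath B ω) (mesh t (ns i))) (ns i + 1)
          * (G (moebius α (discretePath (mesh t (ns i)) (increment (logPath B ω) (mesh t (ns i)))
            (ns i + 1))) : ℝ≥0∞)) atTop
      (𝓝 (moebiusDensity α (M B t ω, A B t ω) * G (moebius α (M B t ω, A B t ω)))) := by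
  have weight_tendsto := tendsto_map'_iff.1 (tendsto_pathWeight (hB.continuous_logPath ω)
    (hB.logPath_zero ω) ht hα (l := map ns atTop) hns.tendsto_atTop (tendsto_map'_iff.2 cubes))
  have image_tendsto := (continuousAt_moebius (by exact hα.ne')).tendsto.comp
    ((hB.tendsto_discretePath ht ω).comp hns.tendsto_atTop)
  have test_tendsto := ENNReal.tendsto_coe.2 ((G.continuous.tendsto _).comp image_tendsto)
  have density_ne_top : moebiusDensity α (M B t ω, A B t ω) ≠ ⊤ := by
    rw [moebiusDensity, indicator_of_mem (by exact hα)]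
    exact ENNReal.ofReal_ne_top
  exact ENNReal.Tendsto.mul weight_tendsto (Or.inr ENNReal.coe_ne_top) test_tendsto
    (Or.inr density_ne_top)

lemma lintegral_moebiusDensity_mul_moebius_le (hB : IsBrownianMotion P B) (ht : 0 < t) (α : ℝ)
    (G : ℝ × ℝ →ᵇ ℝ≥0) :
    ∫⁻ ω, moebiusDensity α (M B t ω, A B t ω) * G (moebius α (M B t ω, A B t ω)) ∂P
      ≤ ∫⁻ ω, G (M B t ω, A B t ω) ∂P := by
  have := hB.isProbabilityMeasure
  obtain ⟨ns, hns, cubes⟩ := hB.exists_subseq_tendsto_sum_abs_increment_pow_three ht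
  have incr_meas (i : ℕ) := hB.measurable_increment_logPath (mesh t (ns i))
  have discrete_le (i : ℕ) := lintegral_pathWeight_mul_moebius_le (α := α) (mesh_pos ht (ns i))
    (incr_meas i) (hB.iIndepFun_increment_logPath (mesh_pos ht (ns i)).le)
    (hB.map_increment_logPath (mesh_pos ht (ns i)).le) (ns i + 1) G.measurable_coe_ennreal_comp
  rw [← ((hB.tendsto_lintegral_discretePath ht G).comp hns.tendsto_atTop).liminf_eq]
  refine le_trans ?_ (liminf_le_liminf (.of_forall discrete_le))
  refine le_trans (lintegral_mono_ae ?_) (lintegral_liminf_le fun i =>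
    (measurable_pathWeight (incr_meas i) _).mul (G.measurable_coe_ennreal_comp.comp
      ((measurable_moebius α).comp (measurable_discretePath (incr_meas i) _))))
  filter_upwards [cubes] with ω cubes
  by_cases hα : 0 < 1 + α * A B t ω
  · exact (hB.tendsto_pathWeight_mul ht hα G hns cubes).liminf_eq.ge
  · rw [moebiusDensity, indicator_of_notMem (by exact hα), zero_mul]
    exact zero_le

end IsBrownianMotion

end BrownianLimit

section LawIdentity

lemma le_of_forall_lintegral_boundedContinuousFunction_le {X : Type*} [TopologicalSpace X]
    [TopologicalSpace.PseudoMetrizableSpace X] [MeasurableSpace X] [BorelSpace X] {μ ν : Measure X}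
    [IsFiniteMeasure μ] (hμν : ∀ G : X →ᵇ ℝ≥0, ∫⁻ p, G p ∂ν ≤ ∫⁻ p, G p ∂μ) : ν ≤ μ := by
  have closed_le {F : Set X} (hF : IsClosed F) : ν F ≤ μ F :=
    ge_of_tendsto' (HasOuterApproxClosed.tendsto_lintegral_apprSeq hF μ) fun n =>
      (HasOuterApproxClosed.measure_le_lintegral hF ν n).trans (hμν _)
  have : IsFiniteMeasure ν := ⟨(closed_le isClosed_univ).trans_lt (measure_lt_top _ _)⟩
  rw [Measure.le_iff]
  intro s hs
  rw [hs.measure_eq_iSup_isClosed_of_ne_top (measure_ne_top ν s)]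
  exact iSup₂_le fun K hK => iSup_le fun hK_closed => (closed_le hK_closed).trans (measure_mono hK)

variable {α : ℝ} {μ : Measure (ℝ × ℝ)}

lemma lintegral_map_moebius_withDensity {g : ℝ × ℝ → ℝ≥0∞} (hg : Measurable g) :
    ∫⁻ p, g p ∂(μ.withDensity (moebiusDensity α)).map (moebius α)
      = ∫⁻ p, moebiusDensity α p * g (moebius α p) ∂μ := by
  rw [lintegral_map hg (by fun_prop), lintegral_withDensity_eq_lintegral_mul _ (by fun_prop)
    (by fun_prop)]
  rfl

lemma ae_map_moebius_withDensity :
    ∀ᵐ p ∂(μ.withDensity (moebiusDensity α)).map (moebius α), 0 < 1 + -α * p.2 := by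
  rw [ae_map_iff (by fun_prop) (measurableSet_one_add_mul_snd_pos _),
    ae_withDensity_iff (by fun_prop)]
  refine .of_forall fun p hp => ?_
  have domain : 0 < 1 + α * p.2 :=
    mem_of_indicator_ne_zero (s := {p : ℝ × ℝ | 0 < 1 + α * p.2}) hp
  rw [one_add_neg_mul_moebius_snd domain.ne']
  exact inv_pos.2 domain

lemma map_moebius_withDensity_eq_restrict
    (hμ : ∀ α, (μ.withDensity (moebiusDensity α)).map (moebius α) ≤ μ) (α : ℝ) :
    (μ.withDensity (moebiusDensity α)).map (moebius α) = μ.restrict {p | 0 < 1 + -α * p.2} := by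
  have hD := measurableSet_one_add_mul_snd_pos (-α)
  refine le_antisymm ?_ (Measure.le_iff.2 fun s hs => ?_)
  · rw [← Measure.restrict_eq_self_of_ae_mem ae_map_moebius_withDensity]
    exact Measure.restrict_mono' .rfl (hμ α)
  let pullback (p : ℝ × ℝ) : ℝ≥0∞ := moebiusDensity α p * s.indicator 1 (moebius α p)
  have indicator_measurable : Measurable (s.indicator (1 : ℝ × ℝ → ℝ≥0∞)) :=
    measurable_one.indicator hs
  have pullback_measurable : Measurable pullback := by fun_prop
  calc μ.restrict {p | 0 < 1 + -α * p.2} s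
      = ∫⁻ p in {p | 0 < 1 + -α * p.2}, s.indicator 1 p ∂μ := (lintegral_indicator_one hs).symm
    _ = ∫⁻ p in {p | 0 < 1 + -α * p.2}, moebiusDensity (-α) p * pullback (moebius (-α) p) ∂μ := by
        refine setLIntegral_congr_fun hD fun p hp => ?_
        have density_mul := moebiusDensity_mul_moebiusDensity_moebius hp
        have inverse := moebius_neg_moebius (ne_of_gt hp)
        rw [neg_neg] at density_mul inverse
        simp only [pullback, inverse, ← mul_assoc, density_mul, one_mul]
    _ ≤ ∫⁻ p, moebiusDensity (-α) p * pullback (moebius (-α) p) ∂μ := setLIntegral_le_lintegral _ _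
    _ = ∫⁻ p, pullback p ∂(μ.withDensity (moebiusDensity (-α))).map (moebius (-α)) :=
        (lintegral_map_moebius_withDensity pullback_measurable).symm
    _ ≤ ∫⁻ p, pullback p ∂μ := lintegral_mono' (hμ (-α)) le_rfl
    _ = (μ.withDensity (moebiusDensity α)).map (moebius α) s := by
        rw [← lintegral_map_moebius_withDensity indicator_measurable, lintegral_indicator_one hs]

end LawIdentity

section JointLaw

variable {P B} {a b t : ℝ}

/-- The law of the pair `(M_t, A_t)`. -/
def jointLaw (P : Measure Ω) (B : ℝ → Ω → ℝ) (t : ℝ) : Measure (ℝ × ℝ) :=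
  P.map fun ω => (M B t ω, A B t ω)

namespace IsBrownianMotion

lemma map_moebius_withDensity_jointLaw_le (hB : IsBrownianMotion P B) (ht : 0 < t) (α : ℝ) :
    ((jointLaw P B t).withDensity (moebiusDensity α)).map (moebius α) ≤ jointLaw P B t := by
  have := hB.isProbabilityMeasure
  have pair_measurable := hB.measurable_M_prodMk_A ht
  have : IsFiniteMeasure (jointLaw P B t) := Measure.isFiniteMeasure_map P _
  refine le_of_forall_lintegral_boundedContinuousFunction_le fun G => ?_
  have G_measurable := G.measurable_coe_ennreal_comp
  rw [lintegral_map_moebius_withDensity G_measurable, jointLaw,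
    lintegral_map (by fun_prop) pair_measurable, lintegral_map G_measurable pair_measurable]
  exact hB.lintegral_moebiusDensity_mul_moebius_le ht α G

lemma map_moebius_withDensity_jointLaw (hB : IsBrownianMotion P B) (ht : 0 < t) (α : ℝ) :
    ((jointLaw P B t).withDensity (moebiusDensity α)).map (moebius α)
      = (jointLaw P B t).restrict {p | 0 < 1 + -α * p.2} :=
  map_moebius_withDensity_eq_restrict (hB.map_moebius_withDensity_jointLaw_le ht) α

lemma measure_M_le_and_A_lt (hB : IsBrownianMotion P B) (ha : 0 < a) (b : ℝ) (ht : 0 < t) :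
    P {ω | M B t ω ≤ b ∧ A B t ω < a}
      = ∫⁻ ω, {ω | M B t ω ≤ b * (1 + A B t ω / a) ^ 2}.indicator
          (fun ω => moebiusDensity a⁻¹ (M B t ω, A B t ω)) ω ∂P := by
  have pair_measurable := hB.measurable_M_prodMk_A ht
  have hb : MeasurableSet {p : ℝ × ℝ | p.1 ≤ b} := measurableSet_le measurable_fst measurable_const
  have preimage_eq : (fun ω => (M B t ω, A B t ω)) ⁻¹' (moebius a⁻¹ ⁻¹' {p | p.1 ≤ b})
      = {ω | M B t ω ≤ b * (1 + A B t ω / a) ^ 2} := by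
    ext ω
    have := hB.A_pos ht ω
    rw [mem_preimage, mem_preimage, mem_ofPred_eq, moebius, div_le_iff₀ (by positivity),
      inv_mul_eq_div, mem_ofPred_eq]
  have event_eq : (fun ω => (M B t ω, A B t ω)) ⁻¹' ({p | p.1 ≤ b} ∩ {p | 0 < 1 + -a⁻¹ * p.2})
      = {ω | M B t ω ≤ b ∧ A B t ω < a} := by
    ext ω
    simp [inv_mul_lt_one₀ ha]
  have law_identity := congrArg (· {p | p.1 ≤ b}) (hB.map_moebius_withDensity_jointLaw ht a⁻¹)
  have image_measurable := measurable_moebius a⁻¹ hb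
  simp only [jointLaw] at law_identity
  rw [Measure.map_apply (measurable_moebius _) hb, withDensity_apply _ image_measurable,
    setLIntegral_map image_measurable (measurable_moebiusDensity _) pair_measurable,
    Measure.restrict_apply hb, Measure.map_apply pair_measurable
      (hb.inter (measurableSet_one_add_mul_snd_pos _)), event_eq, preimage_eq] at law_identity
  rw [← law_identity, lintegral_indicator (preimage_eq ▸ pair_measurable image_measurable)]

end IsBrownianMotion

lemma moebiusDensity_inv (ha : 0 < a) {x : ℝ} (hx : 0 ≤ x) (m : ℝ) :
    moebiusDensity a⁻¹ (m, x) = ENNReal.ofReal (rexp (-2 / a) * rexp (2 * m / (a + x))) := by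
  have domain : 0 < 1 + a⁻¹ * x := by positivity
  have denom : 1 + a⁻¹ * x = (a + x) / a := by field_simp
  have log_eq : 2 * (a⁻¹ * m / ((a + x) / a) - a⁻¹) = -2 / a + 2 * m / (a + x) := by
    have := add_pos_of_pos_of_nonneg ha hx
    field_simp
    ring
  rw [moebiusDensity, indicator_of_mem (by exact domain), ← Real.exp_add, moebiusLogDensity,
    denom, log_eq]

end JointLaw

theorem joint_distribution (hB : IsBrownianMotion P B) (a b t : ℝ)
    (ha : 0 < a) (hb : 0 < b) (ht : 0 < t) :
    (P {ω | M B t ω < b ∧ A B t ω < a}).toReal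
      = Real.exp (-2 / a) *
        ∫ ω, ({ω | M B t ω ≤ b * (1 + A B t ω / a) ^ 2}.indicator
          (fun ω => Real.exp (2 * M B t ω / (a + A B t ω))) ω) ∂P := by
  have hM := hB.measurable_M t
  have hA := hB.measurable_A ht
  have no_atom : P {ω | M B t ω < b ∧ A B t ω < a} = P {ω | M B t ω ≤ b ∧ A B t ω < a} := by
    refine measure_congr ?_
    filter_upwards [hB.ae_M_ne ht b] with ω hω
    exact propext (and_congr_left fun _ => ⟨le_of_lt, fun hle => hle.lt_of_ne hω⟩)
  rw [no_atom, hB.measure_M_le_and_A_lt ha b ht, ← integral_const_mul,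
    integral_eq_lintegral_of_nonneg_ae]
  · congr with ω
    simp only [moebiusDensity_inv ha (hB.A_pos ht _).le]
    by_cases hω : M B t ω ≤ b * (1 + A B t ω / a) ^ 2 <;> simp [hω]
  · exact .of_forall fun ω => mul_nonneg (exp_pos _).le
      (indicator_nonneg (fun _ _ => (exp_pos _).le) _)
  · exact ((Measurable.indicator (by fun_prop)
      (measurableSet_le hM (by fun_prop))).const_mul _).aestronglyMeasurable
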